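/- Let R > 0 and let μ: U → U be holomorphic, and write F = g + conj(h) where g(z) = R ∫₀^z dt/(1 + t²μ(t)) and h(z) = R ∫₀^z μ(t) dt/(1 + t²μ(t)). Then the holomorphic function g − h, i.e. z ↦ R ∫₀^z (1 − μ(t))/(1 + t²μ(t)) dt, is univalent on U and its image is convex in the direction of the real axis (every horizontal line intersects the image in a connected, possibly empty, set). -/

import Mathlib

open Complex Metric MeasureTheory Set Real ComplexConjugate

noncomputable section

/-- The open unit disk in the complex plane. -/
def 𝔻 : Set ℂ := Metric.ball 0 1

/-- The path integral `∫₀^z φ(t) dt` along the segment from `0` to `z`. -/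
def pathInt (φ : ℂ → ℂ) (z : ℂ) : ℂ :=
  ∫ s in (0:ℝ)..1, z * φ ((s : ℂ) * z)

lemma aux_primitive (φ : ℂ → ℂ) (hφ : DifferentiableOn ℂ φ 𝔻) :
    ∀ z ∈ 𝔻, HasDerivAt (pathInt φ) (φ z) z := by
  obtain ⟨g, hg⟩ := DifferentiableOn.isExactOn_ball (c := 0) (r := 1) hφ
  have key : ∀ z ∈ 𝔻, pathInt φ z = g z - g 0 := by
    intro z hz
    have hmem : ∀ s ∈ Set.uIcc (0:ℝ) 1, (s:ℂ) * z ∈ 𝔻 := by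
      intro s hs
      rw [Set.uIcc_of_le zero_le_one] at hs
      simp only [𝔻, Metric.mem_ball, dist_zero_right] at hz ⊢
      rw [norm_mul, Complex.norm_real, Real.norm_of_nonneg hs.1]
      nlinarith [norm_nonneg z, hs.1, hs.2]
    have h1 : ∀ s ∈ Set.uIcc (0:ℝ) 1,
        HasDerivAt (fun s : ℝ => g ((s:ℂ) * z)) (z * φ ((s:ℂ) * z)) s := by
      intro s hs
      have h2 : HasDerivAt (fun s : ℝ => (s:ℂ) * z) (1 * z) s :=
        (Complex.ofRealCLM.hasDerivAt (x := s)).mul_const z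
      have h3 := (hg _ (hmem s hs)).comp s h2
      rw [one_mul, mul_comm] at h3
      exact h3
    have hc : ContinuousOn (fun s : ℝ => z * φ ((s:ℂ) * z)) (Set.uIcc (0:ℝ) 1) := by
      refine continuousOn_const.mul (hφ.continuousOn.comp (by fun_prop) hmem)
    have := intervalIntegral.integral_eq_sub_of_hasDerivAt h1 hc.intervalIntegrable
    simpa [pathInt] using this
  intro z hz
  have hop : 𝔻 ∈ nhds z := Metric.isOpen_ball.mem_nhds hz
  refine ((hg z hz).sub_const (g 0)).congr_of_eventuallyEq ?_
  filter_upwards [hop] with w hw using key w hw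

/-- The vertical strip `|Re ζ| < π/4`. -/
def auxStrip : Set ℂ := {ζ | |ζ.re| < Real.pi / 4}

lemma aux_cos2_pos {x : ℝ} (hx : |x| < Real.pi / 4) : 0 < Real.cos (2 * x) := by
  rw [abs_lt] at hx
  apply Real.cos_pos_of_mem_Ioo
  constructor <;> linarith [hx.1, hx.2]

lemma aux_cos2_re (ζ : ℂ) : (Complex.cos (2 * ζ)).re = Real.cos (2 * ζ.re) * Real.cosh (2 * ζ.im) := by
  have h : (2 * ζ : ℂ) = ((2 * ζ.re : ℝ) : ℂ) + ((2 * ζ.im : ℝ) : ℂ) * I := by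
    apply Complex.ext <;> simp
  rw [h, Complex.cos_add_mul_I, ← Complex.ofReal_cos, ← Complex.ofReal_cosh, ← Complex.ofReal_sin,
    ← Complex.ofReal_sinh]
  simp only [Complex.sub_re, Complex.add_re, Complex.add_im, Complex.sub_im, Complex.mul_re, Complex.mul_im, 
    Complex.ofReal_re, Complex.ofReal_im, Complex.I_re, Complex.I_im]
  ring

lemma aux_normSq (ζ : ℂ) :
    Complex.normSq (Complex.cos ζ) - Complex.normSq (Complex.sin ζ) = Real.cos (2 * ζ.re) := by
  have h : ζ = ((ζ.re : ℝ) : ℂ) + ((ζ.im : ℝ) : ℂ) * I := (Complex.re_add_im ζ).symm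
  generalize ζ.re = x at *
  generalize ζ.im = y at *
  rw [h, Complex.cos_add_mul_I, Complex.sin_add_mul_I, ← Complex.ofReal_cos, ← Complex.ofReal_cosh,
    ← Complex.ofReal_sin, ← Complex.ofReal_sinh, Real.cos_two_mul]
  simp only [Complex.normSq_apply, Complex.sub_re, Complex.add_re, Complex.add_im, Complex.sub_im, Complex.mul_re, Complex.mul_im, 
    Complex.ofReal_re, Complex.ofReal_im, Complex.I_re, Complex.I_im]
  have h1 := Real.cosh_sq y
  have h2 := Real.sin_sq_add_cos_sq x
  have h3 : Real.sin x ^ 2 = 1 - Real.cos x ^ 2 := by linarith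
  ring_nf
  rw [h1, h3]
  ring

lemma aux_cos_ne {ζ : ℂ} (hζ : ζ ∈ auxStrip) : Complex.cos ζ ≠ 0 := by
  intro h
  have h1 := aux_normSq ζ
  have h2 := aux_cos2_pos hζ
  rw [h] at h1
  simp only [map_zero] at h1
  linarith [Complex.normSq_nonneg (Complex.sin ζ)]

lemma aux_tan_mem {ζ : ℂ} (hζ : ζ ∈ auxStrip) : Complex.tan ζ ∈ 𝔻 := by
  have h1 := aux_normSq ζ
  have h2 := aux_cos2_pos hζ
  have h3 := aux_cos_ne hζ
  simp only [𝔻, Metric.mem_ball, dist_zero_right]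
  rw [Complex.tan, norm_div, div_lt_one (norm_pos_iff.2 h3)]
  rw [Complex.normSq_eq_norm_sq, Complex.normSq_eq_norm_sq] at h1
  exact lt_of_pow_lt_pow_left₀ 2 (norm_nonneg _) (by linarith)

lemma aux_tan_surj {z : ℂ} (hz : z ∈ 𝔻) : ∃ ζ ∈ auxStrip, Complex.tan ζ = z := by
  have hz' : ‖z‖ < 1 := by simpa [𝔻] using hz
  refine ⟨Complex.arctan z, ?_, Complex.tan_arctan ?_ ?_⟩
  · have hre : 0 < ((1 + z * I) / (1 - z * I)).re := by
      have hne : (1 - z * I) ≠ 0 := by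
        intro h
        have : z * I = 1 := (sub_eq_zero.1 h).symm
        have h2 : ‖z * I‖ = 1 := by rw [this]; simp
        simp at h2
        linarith
      have hpos := Complex.normSq_pos.2 hne
      have hsq : Complex.normSq z < 1 := by
        rw [Complex.normSq_eq_norm_sq]; nlinarith [norm_nonneg z]
      rw [Complex.div_re, ← add_div]
      apply div_pos _ hpos
      rw [Complex.normSq_apply] at hsq
      simp
      nlinarith
    have harg := Complex.abs_arg_lt_pi_div_two_iff.2 (Or.inl hre)
    have : (Complex.arctan z).re = ((1 + z * I) / (1 - z * I)).arg / 2 := by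
      rw [Complex.arctan]
      generalize (1 + z * I) / (1 - z * I) = w
      have : (-I / 2 : ℂ) = ((1/2 : ℝ) : ℂ) * (-I) := by push_cast; ring
      rw [this, mul_assoc, Complex.re_ofReal_mul]
      simp [Complex.log_im]; ring
    show |(Complex.arctan z).re| < Real.pi / 4
    rw [this, abs_div, abs_two]
    linarith
  · rintro rfl; simp at hz'
  · rintro rfl; simp at hz'

/-- The key identity and bound. -/
lemma aux_bound {ζ m : ℂ} (hζ : ζ ∈ auxStrip) (hm : ‖m‖ < 1) (R : ℝ) (hR : 0 < R) :
    let D := (R : ℂ) * ((1 - m) / (1 + Complex.tan ζ ^ 2 * m)) * (1 / Complex.cos ζ ^ 2)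
    0 < D.re ∧ ‖D‖ * (Real.cos (2 * ζ.re) * Real.cosh (2 * ζ.im)) ≤ 2 * R := by
  intro D
  have hc := aux_cos_ne hζ
  have hm1 : (1 - m) ≠ 0 := by
    intro h
    rw [← sub_eq_zero.1 h] at hm
    simp at hm
  set W : ℂ := (1 - m)⁻¹ - 1 / 2 + Complex.cos (2 * ζ) / 2 with hW
  have hq : 0 < ((1 - m)⁻¹ - 1 / 2).re := by
    have hpos := Complex.normSq_pos.2 hm1
    have hsq : Complex.normSq m < 1 := by
      rw [Complex.normSq_eq_norm_sq]; nlinarith [norm_nonneg m]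
    have : ((1 - m)⁻¹ - 1 / 2).re = (1 - Complex.normSq m) / (2 * Complex.normSq (1 - m)) := by
      rw [Complex.sub_re, Complex.inv_re]
      have h2 : (1 / 2 : ℂ).re = 1 / 2 := by norm_num
      rw [h2]
      field_simp
      simp [Complex.normSq_apply]
      ring
    rw [this]
    apply div_pos <;> linarith
  have hcc : 0 < Real.cos (2 * ζ.re) * Real.cosh (2 * ζ.im) :=
    mul_pos (aux_cos2_pos hζ) (Real.cosh_pos _)
  have hWre : Real.cos (2 * ζ.re) * Real.cosh (2 * ζ.im) / 2 < W.re := by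
    rw [hW, Complex.add_re, Complex.div_ofNat_re, aux_cos2_re]
    linarith
  have hWpos : 0 < W.re := by linarith
  have hW0 : W ≠ 0 := by
    intro h
    rw [h] at hWpos
    simp at hWpos
  have hden : (1 + Complex.tan ζ ^ 2 * m) * Complex.cos ζ ^ 2 = W * (1 - m) := by
    rw [hW, Complex.tan, Complex.cos_two_mul]
    have hs : Complex.sin ζ ^ 2 = 1 - Complex.cos ζ ^ 2 := by
      linear_combination Complex.sin_sq_add_cos_sq ζ
    field_simp
    rw [hs]
    ring
  have hDW : D = (R : ℂ) * W⁻¹ := by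
    show (R : ℂ) * ((1 - m) / (1 + Complex.tan ζ ^ 2 * m)) * (1 / Complex.cos ζ ^ 2) = _
    rw [mul_assoc, div_mul_div_comm, mul_one, hden]
    field_simp
  rw [hDW]
  constructor
  · rw [Complex.re_ofReal_mul, Complex.inv_re]
    exact mul_pos hR (div_pos hWpos (Complex.normSq_pos.2 hW0))
  · rw [norm_mul, norm_inv, Complex.norm_real, Real.norm_of_nonneg hR.le]
    have h1 : W.re ≤ ‖W‖ := Complex.re_le_norm W
    have h2 : 0 < ‖W‖ := norm_pos_iff.2 hW0
    rw [mul_assoc, mul_comm 2 R]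
    apply mul_le_mul_of_nonneg_left _ hR.le
    rw [inv_mul_le_iff₀ h2]
    linarith

lemma aux_convex : Convex ℝ auxStrip := by
  have : auxStrip = Complex.reLm ⁻¹' (Set.Ioo (-(Real.pi/4)) (Real.pi/4)) := by
    ext ζ; simp [auxStrip, abs_lt]
  rw [this]
  exact (convex_Ioo _ _).linear_preimage _

lemma aux_inj (ψ ψ' : ℂ → ℂ) (h : ∀ ζ ∈ auxStrip, HasDerivAt ψ (ψ' ζ) ζ)
    (hpos : ∀ ζ ∈ auxStrip, 0 < (ψ' ζ).re) : Set.InjOn ψ auxStrip := by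
  intro a ha b hb hab
  by_contra hne
  have hd : b - a ≠ 0 := sub_ne_zero.2 (Ne.symm hne)
  have hmem : ∀ t ∈ Set.Icc (0:ℝ) 1, a + (t:ℂ) * (b - a) ∈ auxStrip := by
    intro t ht
    have := aux_convex.add_smul_sub_mem ha hb ht
    simpa using this
  have hder : ∀ t ∈ Set.Icc (0:ℝ) 1,
      HasDerivAt (fun t : ℝ => (conj (b - a) * ψ (a + (t:ℂ) * (b - a))).re)
        (Complex.normSq (b - a) * (ψ' (a + (t:ℂ) * (b - a))).re) t := by
    intro t ht
    have h2 : HasDerivAt (fun s : ℝ => a + (s:ℂ) * (b - a)) (1 * (b - a)) t :=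
      ((Complex.ofRealCLM.hasDerivAt (x := t)).mul_const (b - a)).const_add a
    have h3 := ((h _ (hmem t ht)).comp t h2).const_mul (conj (b - a))
    have h4 := Complex.reCLM.hasFDerivAt.comp_hasDerivAt t h3
    refine h4.congr_deriv ?_
    rw [Complex.reCLM_apply, one_mul, mul_left_comm, mul_comm (conj (b - a)), Complex.mul_conj,
      mul_comm, Complex.re_ofReal_mul]
  have hmono : StrictMonoOn (fun t : ℝ => (conj (b - a) * ψ (a + (t:ℂ) * (b - a))).re)
      (Set.Icc 0 1) := by
    apply strictMonoOn_of_deriv_pos (convex_Icc 0 1)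
    · intro t ht
      exact (hder t ht).continuousAt.continuousWithinAt
    · intro t ht
      rw [interior_Icc] at ht
      have ht' := Set.Ioo_subset_Icc_self ht
      rw [(hder t ht').deriv]
      exact mul_pos (Complex.normSq_pos.2 hd) (hpos _ (hmem t ht'))
  have := hmono (Set.left_mem_Icc.2 zero_le_one) (Set.right_mem_Icc.2 zero_le_one) one_pos
  simp [hab] at this

lemma aux_pt_mem {x : ℝ} (hx : x ∈ Set.Ioo (-(Real.pi/4)) (Real.pi/4)) (y : ℝ) :
    (⟨x, y⟩ : ℂ) ∈ auxStrip := by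
  simpa [auxStrip, abs_lt] using hx

lemma aux_mono (ψ ψ' : ℂ → ℂ) (h : ∀ ζ ∈ auxStrip, HasDerivAt ψ (ψ' ζ) ζ)
    (hpos : ∀ ζ ∈ auxStrip, 0 < (ψ' ζ).re) {x : ℝ}
    (hx : x ∈ Set.Ioo (-(Real.pi/4)) (Real.pi/4)) :
    StrictMono (fun y : ℝ => (ψ ⟨x, y⟩).im) ∧ Continuous (fun y : ℝ => (ψ ⟨x, y⟩).im) := by
  have hder : ∀ y : ℝ, HasDerivAt (fun y : ℝ => (ψ ⟨x, y⟩).im) (ψ' ⟨x, y⟩).re y := by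
    intro y
    have h2 : HasDerivAt (fun s : ℝ => (⟨x, s⟩ : ℂ)) (1 * I) y := by
      have := ((Complex.ofRealCLM.hasDerivAt (x := y)).mul_const I).const_add (x : ℂ)
      have he : (fun s : ℝ => (⟨x, s⟩ : ℂ)) = fun s : ℝ => (x : ℂ) + Complex.ofRealCLM s * I := by
        ext s; rw [Complex.mk_eq_add_mul_I]; rfl
      rw [he]
      refine this.congr_deriv ?_
      simp
    have h3 := (h _ (aux_pt_mem hx y)).comp y h2
    have h4 := Complex.imCLM.hasFDerivAt.comp_hasDerivAt y h3
    refine h4.congr_deriv ?_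
    simp
  refine ⟨strictMono_of_deriv_pos fun y => ?_, ?_⟩
  · rw [(hder y).deriv]
    exact hpos _ (aux_pt_mem hx y)
  · exact continuous_iff_continuousAt.2 fun y => (hder y).continuousAt

lemma aux_horiz (ψ ψ' : ℂ → ℂ) (K : ℝ) (h : ∀ ζ ∈ auxStrip, HasDerivAt ψ (ψ' ζ) ζ)
    (hb : ∀ ζ ∈ auxStrip, ‖ψ' ζ‖ * (Real.cos (2 * ζ.re) * |ζ.im|) ≤ K) {x x0 : ℝ}
    (hx : x ∈ Set.Ioo (-(Real.pi/4)) (Real.pi/4))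
    (hx0 : x0 ∈ Set.Ioo (-(Real.pi/4)) (Real.pi/4)) :
    ∃ C : ℝ, ∀ y : ℝ, y ≠ 0 → |(ψ ⟨x, y⟩).im - (ψ ⟨x0, y⟩).im| ≤ C / |y| := by
  set r := max |x| |x0| with hr
  have hr0 : 0 ≤ r := le_max_of_le_left (abs_nonneg _)
  have hr4 : r < Real.pi / 4 := max_lt (abs_lt.2 hx) (abs_lt.2 hx0)
  have hcr : 0 < Real.cos (2 * r) := aux_cos2_pos (by rwa [abs_of_nonneg hr0])
  refine ⟨K / Real.cos (2 * r) * |x - x0|, fun y hy => ?_⟩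
  have hy' : 0 < |y| := abs_pos.2 hy
  set T : Set ℂ := {ζ | |ζ.re| ≤ r ∧ ζ.im = y} with hT
  have hTconv : Convex ℝ T := by
    have : T = Complex.reLm ⁻¹' (Set.Icc (-r) r) ∩ Complex.imLm ⁻¹' {y} := by
      ext ζ; simp [T, abs_le]
    rw [this]
    exact ((convex_Icc _ _).linear_preimage _).inter ((convex_singleton _).linear_preimage _)
  have hTS : T ⊆ auxStrip := fun ζ hζ => lt_of_le_of_lt hζ.1 hr4
  have hbd : ∀ ζ ∈ T, ‖ψ' ζ‖ ≤ K / (Real.cos (2 * r) * |y|) := by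
    intro ζ hζ
    rw [le_div_iff₀ (mul_pos hcr hy')]
    refine le_trans ?_ (hb ζ (hTS hζ))
    rw [hζ.2]
    gcongr ‖ψ' ζ‖ * (?_ * |y|)
    rw [← Real.cos_abs (2 * ζ.re), abs_mul, abs_two]
    apply Real.cos_le_cos_of_nonneg_of_le_pi
    · positivity
    · linarith [Real.pi_pos]
    · linarith [hζ.1]
  have hmv := hTconv.norm_image_sub_le_of_norm_hasDerivWithin_le
    (fun ζ hζ => (h ζ (hTS hζ)).hasDerivWithinAt) hbd
    (x := ⟨x0, y⟩) (y := ⟨x, y⟩) ⟨le_max_right _ _, rfl⟩ ⟨le_max_left _ _, rfl⟩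
  have hn : ‖(⟨x, y⟩ : ℂ) - ⟨x0, y⟩‖ = |x - x0| := by
    have : (⟨x, y⟩ : ℂ) - ⟨x0, y⟩ = ((x - x0 : ℝ) : ℂ) := by
      apply Complex.ext <;> simp
    rw [this, Complex.norm_real, Real.norm_eq_abs]
  rw [hn] at hmv
  rw [← Complex.sub_im]
  refine (Complex.abs_im_le_norm _).trans (hmv.trans (le_of_eq ?_))
  field_simp

lemma aux_level (ψ ψ' : ℂ → ℂ) (K : ℝ) (h : ∀ ζ ∈ auxStrip, HasDerivAt ψ (ψ' ζ) ζ)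
    (hpos : ∀ ζ ∈ auxStrip, 0 < (ψ' ζ).re)
    (hb : ∀ ζ ∈ auxStrip, ‖ψ' ζ‖ * (Real.cos (2 * ζ.re) * |ζ.im|) ≤ K) (c : ℝ) {x x0 y0 : ℝ}
    (hx : x ∈ Set.Ioo (-(Real.pi/4)) (Real.pi/4))
    (hx0 : x0 ∈ Set.Ioo (-(Real.pi/4)) (Real.pi/4)) (hc : (ψ ⟨x0, y0⟩).im = c) :
    ∃ y : ℝ, (ψ ⟨x, y⟩).im = c := by
  obtain ⟨C, hC⟩ := aux_horiz ψ ψ' K h hb hx hx0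
  obtain ⟨hm0, -⟩ := aux_mono ψ ψ' h hpos hx0
  obtain ⟨-, hcont⟩ := aux_mono ψ ψ' h hpos hx
  have hup : ∃ y, c ≤ (ψ ⟨x, y⟩).im := by
    have h1 : c < (ψ ⟨x0, y0 + 1⟩).im := hc ▸ hm0 (lt_add_one y0)
    have ht : Filter.Tendsto (fun y : ℝ => C / |y|) Filter.atTop (nhds 0) :=
      Filter.Tendsto.div_atTop tendsto_const_nhds Filter.tendsto_abs_atTop_atTop
    have he := ht.eventually_lt_const (sub_pos.2 h1)
    obtain ⟨y, hy1, hy2, hy3⟩ := (he.and ((Filter.eventually_ge_atTop (y0 + 1)).and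
      (Filter.eventually_ne_atTop 0))).exists
    refine ⟨y, ?_⟩
    have := abs_le.1 (hC y hy3)
    have h5 : (ψ ⟨x0, y0 + 1⟩).im ≤ (ψ ⟨x0, y⟩).im := hm0.monotone hy2
    linarith [this.1]
  have hdn : ∃ y, (ψ ⟨x, y⟩).im ≤ c := by
    have h1 : (ψ ⟨x0, y0 - 1⟩).im < c := hc ▸ hm0 (sub_one_lt y0)
    have ht : Filter.Tendsto (fun y : ℝ => C / |y|) Filter.atBot (nhds 0) :=
      Filter.Tendsto.div_atTop tendsto_const_nhds Filter.tendsto_abs_atBot_atTop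
    have he := ht.eventually_lt_const (sub_pos.2 h1)
    obtain ⟨y, hy1, hy2, hy3⟩ := (he.and ((Filter.eventually_le_atBot (y0 - 1)).and
      (Filter.eventually_ne_atBot 0))).exists
    refine ⟨y, ?_⟩
    have := abs_le.1 (hC y hy3)
    have h5 : (ψ ⟨x0, y⟩).im ≤ (ψ ⟨x0, y0 - 1⟩).im := hm0.monotone hy2
    linarith [this.2]
  obtain ⟨y1, hy1⟩ := hup
  obtain ⟨y2, hy2⟩ := hdn
  exact mem_range_of_exists_le_of_exists_ge hcont ⟨y2, hy2⟩ ⟨y1, hy1⟩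

lemma aux_preconn (ψ ψ' : ℂ → ℂ) (K : ℝ) (h : ∀ ζ ∈ auxStrip, HasDerivAt ψ (ψ' ζ) ζ)
    (hpos : ∀ ζ ∈ auxStrip, 0 < (ψ' ζ).re)
    (hb : ∀ ζ ∈ auxStrip, ‖ψ' ζ‖ * (Real.cos (2 * ζ.re) * |ζ.im|) ≤ K) (c : ℝ) :
    IsPreconnected ((ψ '' auxStrip) ∩ {w : ℂ | w.im = c}) := by
  rcases Set.eq_empty_or_nonempty ((ψ '' auxStrip) ∩ {w : ℂ | w.im = c}) with he | hne
  · rw [he]; exact isPreconnected_empty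
  obtain ⟨_, ⟨ζ0, hζ0, rfl⟩, hc⟩ := hne
  have hex : ∀ x : ℝ, ∃ y : ℝ, x ∈ Set.Ioo (-(Real.pi/4)) (Real.pi/4) → (ψ ⟨x, y⟩).im = c := by
    intro x
    by_cases hx : x ∈ Set.Ioo (-(Real.pi/4)) (Real.pi/4)
    · obtain ⟨y, hy⟩ := aux_level ψ ψ' K h hpos hb c (x := x) (x0 := ζ0.re) (y0 := ζ0.im) hx
        (abs_lt.1 hζ0) hc
      exact ⟨y, fun _ => hy⟩
    · exact ⟨0, fun h => absurd h hx⟩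
  choose Y hY using hex
  have hYc : ContinuousOn Y (Set.Ioo (-(Real.pi/4)) (Real.pi/4)) := by
    intro x0 hx0
    have hcx : ∀ a : ℝ, ContinuousWithinAt (fun x : ℝ => (ψ ⟨x, a⟩).im)
        (Set.Ioo (-(Real.pi/4)) (Real.pi/4)) x0 := by
      intro a
      apply ContinuousAt.continuousWithinAt
      have h1 : ContinuousAt (fun x : ℝ => (⟨x, a⟩ : ℂ)) x0 := by
        have : (fun x : ℝ => (⟨x, a⟩ : ℂ)) = fun x : ℝ => (x : ℂ) + a * I := by
          ext x; rw [Complex.mk_eq_add_mul_I]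
        rw [this]
        fun_prop
      exact Complex.continuous_im.continuousAt.comp
        (ContinuousAt.comp (f := fun x : ℝ => (⟨x, a⟩ : ℂ))
          (h _ (aux_pt_mem hx0 a)).continuousAt h1)
    have hm0 := (aux_mono ψ ψ' h hpos hx0).1
    refine tendsto_order.2 ⟨fun a ha => ?_, fun a ha => ?_⟩
    · have h1 : (ψ ⟨x0, a⟩).im < c := hY x0 hx0 ▸ hm0 ha
      filter_upwards [(hcx a).eventually_lt_const h1, self_mem_nhdsWithin] with x hx1 hx2
      rw [← hY x hx2] at hx1
      exact (aux_mono ψ ψ' h hpos hx2).1.lt_iff_lt.1 hx1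
    · have h1 : c < (ψ ⟨x0, a⟩).im := hY x0 hx0 ▸ hm0 ha
      filter_upwards [(hcx a).eventually_const_lt h1, self_mem_nhdsWithin] with x hx1 hx2
      rw [← hY x hx2] at hx1
      exact (aux_mono ψ ψ' h hpos hx2).1.lt_iff_lt.1 hx1
  have himg : (ψ '' auxStrip) ∩ {w : ℂ | w.im = c} =
      (fun x : ℝ => ψ ((x : ℂ) + (Y x : ℂ) * I)) '' Set.Ioo (-(Real.pi/4)) (Real.pi/4) := by
    ext w
    constructor
    · rintro ⟨⟨ζ, hζ, rfl⟩, hw⟩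
      have hx : ζ.re ∈ Set.Ioo (-(Real.pi/4)) (Real.pi/4) := abs_lt.1 hζ
      refine ⟨ζ.re, hx, ?_⟩
      have : Y ζ.re = ζ.im := by
        apply (aux_mono ψ ψ' h hpos hx).1.injective
        exact (hY _ hx).trans hw.symm
      simp only [this, Complex.re_add_im]
    · rintro ⟨x, hx, rfl⟩
      simp only [← Complex.mk_eq_add_mul_I]
      exact ⟨⟨_, aux_pt_mem hx _, rfl⟩, hY x hx⟩
  rw [himg]
  apply isPreconnected_Ioo.image
  have hψ : ContinuousOn ψ auxStrip := fun ζ hζ => (h ζ hζ).continuousAt.continuousWithinAt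
  refine hψ.comp ?_ ?_
  · exact Complex.continuous_ofReal.continuousOn.add
      ((Complex.continuous_ofReal.comp_continuousOn hYc).mul continuousOn_const)
  · intro x hx
    simp only [← Complex.mk_eq_add_mul_I]
    exact aux_pt_mem hx _

lemma aux_abs_le_cosh (y : ℝ) : |y| ≤ Real.cosh (2 * y) := by
  rw [Real.cosh_eq]
  have h1 := Real.add_one_le_exp (2 * y)
  have h2 := Real.add_one_le_exp (-(2 * y))
  have h3 := Real.exp_pos (2 * y)
  have h4 := Real.exp_pos (-(2 * y))
  rw [abs_le]
  constructor <;> linarith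

/-- For `R > 0` and `μ : 𝔻 → 𝔻` holomorphic, with
`F = g + conj h`, `g(z) = R∫₀^z dt/(1+t²μ(t))`, `h(z) = R∫₀^z μ(t)dt/(1+t²μ(t))`,
the holomorphic function `g - h : z ↦ R∫₀^z (1-μ(t))/(1+t²μ(t)) dt` is univalent
on `𝔻` and its image is convex in the direction of the real axis: every
horizontal line meets the image in a connected (possibly empty) set. -/
theorem stmt6 (R : ℝ) (hR : 0 < R) (μ : ℂ → ℂ)
    (hμ : DifferentiableOn ℂ μ 𝔻) (hμU : Set.MapsTo μ 𝔻 𝔻)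
    (G : ℂ → ℂ)
    (hGdef : G = fun z => (R : ℂ) * pathInt (fun t => (1 - μ t) / (1 + t ^ 2 * μ t)) z) :
    Set.InjOn G 𝔻 ∧
      ∀ c : ℝ, IsPreconnected ((G '' 𝔻) ∩ {w : ℂ | w.im = c}) := by
  have hDm : ∀ z ∈ 𝔻, ‖z‖ < 1 := fun z hz => by simpa [𝔻] using hz
  have hne : ∀ z ∈ 𝔻, 1 + z ^ 2 * μ z ≠ 0 := by
    intro z hz h0
    have h1 := hDm z hz
    have h2 := hDm _ (hμU hz)
    have h3 : z ^ 2 * μ z = -1 := by linear_combination h0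
    have h4 : ‖z ^ 2 * μ z‖ = 1 := by rw [h3]; simp
    rw [norm_mul, norm_pow] at h4
    have h5 : ‖z‖ ^ 2 ≤ 1 := pow_le_one₀ (norm_nonneg _) h1.le
    nlinarith [norm_nonneg (μ z)]
  have hφ : DifferentiableOn ℂ (fun t => (1 - μ t) / (1 + t ^ 2 * μ t)) 𝔻 := by
    refine DifferentiableOn.div ?_ ?_ hne
    · exact (differentiableOn_const _).sub hμ
    · exact (differentiableOn_const _).add ((differentiableOn_id.pow 2).mul hμ)
  have hG : ∀ z ∈ 𝔻, HasDerivAt G ((R : ℂ) * ((1 - μ z) / (1 + z ^ 2 * μ z))) z := by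
    intro z hz
    rw [hGdef]
    exact (aux_primitive _ hφ z hz).const_mul (R : ℂ)
  set ψ' : ℂ → ℂ := fun ζ => (R : ℂ) * ((1 - μ (Complex.tan ζ)) /
    (1 + Complex.tan ζ ^ 2 * μ (Complex.tan ζ))) * (1 / Complex.cos ζ ^ 2) with hψ'
  have hder : ∀ ζ ∈ auxStrip, HasDerivAt (fun ζ => G (Complex.tan ζ)) (ψ' ζ) ζ := by
    intro ζ hζ
    exact (hG _ (aux_tan_mem hζ)).comp ζ (Complex.hasDerivAt_tan (aux_cos_ne hζ))
  have hbd := fun ζ (hζ : ζ ∈ auxStrip) =>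
    aux_bound hζ (hDm _ (hμU (aux_tan_mem hζ))) R hR
  have hpos : ∀ ζ ∈ auxStrip, 0 < (ψ' ζ).re := fun ζ hζ => (hbd ζ hζ).1
  have hb : ∀ ζ ∈ auxStrip, ‖ψ' ζ‖ * (Real.cos (2 * ζ.re) * |ζ.im|) ≤ 2 * R := by
    intro ζ hζ
    refine le_trans ?_ (hbd ζ hζ).2
    exact mul_le_mul_of_nonneg_left (mul_le_mul_of_nonneg_left (aux_abs_le_cosh _)
      (aux_cos2_pos hζ).le) (norm_nonneg _)
  have himg : G '' 𝔻 = (fun ζ => G (Complex.tan ζ)) '' auxStrip := by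
    ext w
    constructor
    · rintro ⟨z, hz, rfl⟩
      obtain ⟨ζ, hζ, rfl⟩ := aux_tan_surj hz
      exact ⟨ζ, hζ, rfl⟩
    · rintro ⟨ζ, hζ, rfl⟩
      exact ⟨_, aux_tan_mem hζ, rfl⟩
  constructor
  · intro z hz w hw hzw
    obtain ⟨ζ, hζ, rfl⟩ := aux_tan_surj hz
    obtain ⟨ξ, hξ, rfl⟩ := aux_tan_surj hw
    rw [aux_inj _ ψ' hder hpos hζ hξ hzw]
  · intro c
    rw [himg]
    exact aux_preconn _ ψ' (2 * R) hder hpos hb c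

end
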